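/- Constant density profiles outside the disturbed range evolve exactly as for homogeneous TASEP: if ρ ∈ [0,ρ*] ∪ [1−ρ*,1] and v_0(q) = ρq, then v(x,t) = ρx − t·ρ(1−ρ) for all x ∈ ℝ and t > 0. -/

import Mathlib

/-!
The function `(x, t) ↦ ρ x - t ρ(1 - ρ)` is a calibration for the running cost: almost everywhere
along any admissible path,
`λ(w) g₀(w' / λ(w)) ≥ ρ(1 - ρ) - ρ w'`.
Where `w ≠ 0` this is the Fenchel–Young inequality for `g₀`. Where `w = 0`, the derivative `w'`
vanishes up to a countable set of times, because zeros with nonzero slope are isolated; there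
the inequality reads `c / 4 ≥ ρ(1 - ρ)`, which is exactly the condition
`ρ ∈ [0, ρ*] ∪ [1 - ρ*, 1]`. Integrating, with the fundamental theorem of calculus for `w`
(continuous, and differentiable off the finitely many breakpoints), gives the upper bound.

Equality holds along the characteristic `w(s) = x + (1 - 2ρ)(s - t)`: if `ρ ≠ 1/2` it meets the
slow site `0` at most once, and `ρ = 1/2` is allowed only when `c = 1`, where there is no slow site.

The Lebesgue integral of a non-integrable function is `0` by convention, so integrability of
the running cost has to be established (`integrable_cost`) before it can be bounded below.
-/

open Filter Set MeasureTheory intervalIntegral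

/-- The Legendre conjugate `g₀` of the TASEP flux `f₀(ρ) = ρ(1−ρ)`:
`g₀(x) = −x` for `x ≤ −1`, `(1−x)²/4` for `−1 ≤ x ≤ 1`, and `0` for `x ≥ 1`. -/
noncomputable def g0 (x : ℝ) : ℝ :=
  if x ≤ -1 then -x else if x ≤ 1 then (1 - x) ^ 2 / 4 else 0

/-- The macroscopic rate profile: `λ(x) = 1` for `x ≠ 0` and `λ(0) = c`. -/
noncomputable def lam (c : ℝ) (x : ℝ) : ℝ := if x = 0 then c else 1

/-- `w` is piecewise `C¹` on `[a,b]`: continuous on `[a,b]` and `C¹` on each cell of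
some finite partition `a = p 0 < p 1 < ⋯ < p k = b`. -/
def PiecewiseC1On (w : ℝ → ℝ) (a b : ℝ) : Prop :=
  ContinuousOn w (Set.Icc a b) ∧
    ∃ (k : ℕ) (p : ℕ → ℝ), p 0 = a ∧ p k = b ∧ (∀ i < k, p i < p (i + 1)) ∧
      ∀ i < k, ContDiffOn ℝ 1 w (Set.Icc (p i) (p (i + 1)))

/-- The running cost `∫₀ᵗ λ(w(s)) g₀(w′(s)/λ(w(s))) ds` of a path `w : [0,t] → ℝ`. -/
noncomputable def pathCost (c t : ℝ) (w : ℝ → ℝ) : ℝ :=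
  ∫ s in (0 : ℝ)..t, lam c (w s) * g0 (deriv w s / lam c (w s))

/-- The variational (Hopf–Lax type) solution
`v(x,t) = sup { v₀(w(0)) − ∫₀ᵗ λ(w(s)) g₀(w′(s)/λ(w(s))) ds : w piecewise C¹, w(t) = x }`. -/
noncomputable def vVar (c : ℝ) (v0 : ℝ → ℝ) (x t : ℝ) : ℝ :=
  sSup { a | ∃ w : ℝ → ℝ, PiecewiseC1On w 0 t ∧ w t = x ∧ a = v0 (w 0) - pathCost c t w }

/-- The optimal control cost
`I(x,t,q) = inf { ∫₀ᵗ λ(w(s)) g₀(w′(s)/λ(w(s))) ds : w piecewise C¹, w(0) = q, w(t) = x }`. -/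
noncomputable def Icost (c : ℝ) (x t q : ℝ) : ℝ :=
  sInf { a | ∃ w : ℝ → ℝ, PiecewiseC1On w 0 t ∧ w 0 = q ∧ w t = x ∧ a = pathCost c t w }

/-- Fenchel–Young: `g₀` is the supremum of `ρ(1 - ρ) - ρ y` over `ρ ∈ [0, 1]`. -/
lemma fenchel_young_g0 {ρ : ℝ} (h0 : 0 ≤ ρ) (h1 : ρ ≤ 1) (y : ℝ) :
    ρ * (1 - ρ) - ρ * y ≤ g0 y := by
  unfold g0
  split_ifs with h h'
  · nlinarith [mul_nonneg (sub_nonneg.2 h1) (sub_nonneg.2 h), sq_nonneg (1 - ρ)]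
  · nlinarith [sq_nonneg ((1 - y) / 2 - ρ)]
  · nlinarith [mul_nonneg h0 (sub_nonneg.2 (le_of_not_ge h')), sq_nonneg ρ]

lemma g0_nonneg (y : ℝ) : 0 ≤ g0 y := by
  simpa using fenchel_young_g0 le_rfl zero_le_one y

lemma g0_le (y : ℝ) : g0 y ≤ |y| + 1 := by
  unfold g0
  split_ifs with h h'
  · linarith [neg_le_abs y]
  · have := abs_nonneg y
    nlinarith
  · positivity

lemma g0_one_sub_two_mul {ρ : ℝ} (h0 : 0 ≤ ρ) (h1 : ρ ≤ 1) : g0 (1 - 2 * ρ) = ρ ^ 2 := by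
  unfold g0
  split_ifs with h h'
  · obtain rfl : ρ = 1 := by linarith
    norm_num
  · ring
  · linarith

lemma measurable_g0 : Measurable g0 := by
  unfold g0
  refine Measurable.ite measurableSet_Iic (by fun_prop) ?_
  exact Measurable.ite measurableSet_Iic (by fun_prop) (by fun_prop)

lemma measurable_lam (c : ℝ) : Measurable (lam c) := by
  unfold lam
  exact Measurable.ite (measurableSet_singleton 0) measurable_const measurable_const

/-- The Lagrangian grows at most linearly in the velocity, uniformly in the position. -/
lemma abs_cost_le {c : ℝ} (hc : c ∈ Ioc (0 : ℝ) 1) (q y : ℝ) :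
    |lam c q * g0 (y / lam c q)| ≤ |y| + 1 := by
  have hl : 0 < lam c q ∧ lam c q ≤ 1 := by
    unfold lam
    split_ifs
    · exact hc
    · norm_num
  rw [abs_of_nonneg (mul_nonneg hl.1.le (g0_nonneg _))]
  calc lam c q * g0 (y / lam c q) ≤ lam c q * (|y / lam c q| + 1) :=
        mul_le_mul_of_nonneg_left (g0_le _) hl.1.le
    _ = |y| + lam c q := by
        rw [abs_div, abs_of_pos hl.1, mul_add, mul_div_cancel₀ _ hl.1.ne', mul_one]
    _ ≤ |y| + 1 := by linarith [hl.2]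

/-- Zeros at which the derivative does not vanish are isolated, hence countable. -/
lemma countable_transversal_zeros (w : ℝ → ℝ) :
    {s | w s = 0 ∧ deriv w s ≠ 0}.Countable := by
  refine (HereditarilyLindelofSpace.isLindelof _).countable ?_
  rw [discreteTopology_subtype_iff]
  rintro s ⟨-, hs⟩
  have hd := (differentiableAt_of_deriv_ne_zero hs).hasDerivAt
  rw [inf_principal_eq_bot]
  filter_upwards [hd.eventually_ne (c := 0) hs] with z hz hz'
  exact hz hz'.1

/-- A point of `(p 0, p k)` off the breakpoints lies in an open cell of the partition. -/
lemma exists_open_cell {k : ℕ} {p : ℕ → ℝ} {s : ℝ} (hs : s ∈ Ioo (p 0) (p k))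
    (hp : s ∉ range p) : ∃ i < k, s ∈ Ioo (p i) (p (i + 1)) := by
  induction k with
  | zero => exact absurd (hs.1.trans hs.2) (lt_irrefl _)
  | succ n ih =>
    rcases lt_trichotomy s (p n) with h | h | h
    · obtain ⟨i, hi, hi'⟩ := ih ⟨hs.1, h⟩
      exact ⟨i, by omega, hi'⟩
    · exact absurd ⟨n, h.symm⟩ hp
    · exact ⟨n, by omega, h, hs.2⟩

/-- On a closed cell, `deriv w` agrees on the open cell with the continuous function `derivWithin`;
this is what makes it bounded, even though it may be a junk value at the breakpoints. -/
lemma exists_deriv_bound {w : ℝ → ℝ} {a b : ℝ} (hab : a < b)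
    (hw : ContDiffOn ℝ 1 w (Icc a b)) :
    ∃ C, ∀ s ∈ Ioo a b, |deriv w s| ≤ C := by
  have hc := hw.continuousOn_derivWithin (uniqueDiffOn_Icc hab) le_rfl
  obtain ⟨C, hC⟩ := isCompact_Icc.exists_bound_of_continuousOn hc
  refine ⟨C, fun s hs => ?_⟩
  rw [← derivWithin_of_mem_nhds (Icc_mem_nhds hs.1 hs.2)]
  exact hC s (Ioo_subset_Icc_self hs)

lemma intervalIntegrable_of_bound {f : ℝ → ℝ} {a b C : ℝ} (hab : a < b)
    (hf : AEStronglyMeasurable f (volume.restrict (Icc a b)))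
    (hC : ∀ s ∈ Ioo a b, |f s| ≤ C) : IntervalIntegrable f volume a b := by
  rw [intervalIntegrable_iff_integrableOn_Ioo_of_le hab.le]
  refine IntegrableOn.of_bound measure_Ioo_lt_top
    (hf.mono_measure (Measure.restrict_mono Ioo_subset_Icc_self le_rfl)) C ?_
  exact (ae_restrict_iff' measurableSet_Ioo).2 (ae_of_all _ hC)

lemma integrable_deriv {w : ℝ → ℝ} {t : ℝ} (hw : PiecewiseC1On w 0 t) :
    IntervalIntegrable (deriv w) volume 0 t := by
  obtain ⟨-, k, p, h0, hk, hlt, hC1⟩ := hw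
  rw [← h0, ← hk]
  refine IntervalIntegrable.trans_iterate fun i hi => ?_
  obtain ⟨C, hC⟩ := exists_deriv_bound (hlt i hi) (hC1 i hi)
  exact intervalIntegrable_of_bound (hlt i hi) (measurable_deriv w).aestronglyMeasurable hC

lemma integrable_cost {c : ℝ} (hc : c ∈ Ioc (0 : ℝ) 1) {w : ℝ → ℝ} {t : ℝ}
    (hw : PiecewiseC1On w 0 t) :
    IntervalIntegrable (fun s => lam c (w s) * g0 (deriv w s / lam c (w s))) volume 0 t := by
  obtain ⟨-, k, p, h0, hk, hlt, hC1⟩ := hw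
  rw [← h0, ← hk]
  refine IntervalIntegrable.trans_iterate fun i hi => ?_
  obtain ⟨C, hC⟩ := exists_deriv_bound (hlt i hi) (hC1 i hi)
  refine intervalIntegrable_of_bound (C := C + 1) (hlt i hi) ?_ fun s hs =>
    (abs_cost_le hc _ _).trans (by linarith [hC s hs])
  have hm : AEMeasurable (fun s => lam c (w s)) (volume.restrict (Icc (p i) (p (i + 1)))) :=
    (measurable_lam c).comp_aemeasurable ((hC1 i hi).continuousOn.aemeasurable measurableSet_Icc)
  exact (hm.mul (measurable_g0.comp_aemeasurable
    ((measurable_deriv w).aemeasurable.div hm))).aestronglyMeasurable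

lemma integral_deriv_piecewise {w : ℝ → ℝ} {t : ℝ} (ht : 0 ≤ t) (hw : PiecewiseC1On w 0 t) :
    ∫ s in (0 : ℝ)..t, deriv w s = w t - w 0 := by
  have hint := integrable_deriv hw
  obtain ⟨hcont, k, p, h0, hk, hlt, hC1⟩ := hw
  refine integral_eq_of_hasDerivAt_off_countable_of_le w _ ht (countable_range p) hcont ?_ hint
  rintro s ⟨hs, hsp⟩
  rw [← h0, ← hk] at hs
  obtain ⟨i, hi, his⟩ := exists_open_cell hs hsp
  exact (((hC1 i hi).differentiableOn one_ne_zero).differentiableAt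
    (Icc_mem_nhds his.1 his.2)).hasDerivAt

/-- The calibration inequality along a path, at every time which is not a transversal zero. -/
lemma calibration {c ρ : ℝ} (h0 : 0 ≤ ρ) (h1 : ρ ≤ 1) (hρc : ρ * (1 - ρ) ≤ c / 4) {q y : ℝ}
    (hqy : q = 0 → y = 0) :
    ρ * (1 - ρ) - ρ * y ≤ lam c q * g0 (y / lam c q) := by
  by_cases hq : q = 0
  · rw [hqy hq, zero_div]
    simp only [lam, hq, if_true]
    norm_num [g0]
    linarith
  · simpa [lam, hq] using fenchel_young_g0 h0 h1 y

lemma pathCost_lower_bound {c ρ : ℝ} (hc : c ∈ Ioc (0 : ℝ) 1) (h0 : 0 ≤ ρ) (h1 : ρ ≤ 1)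
    (hρc : ρ * (1 - ρ) ≤ c / 4) {w : ℝ → ℝ} {t : ℝ} (ht : 0 ≤ t) (hw : PiecewiseC1On w 0 t) :
    t * (ρ * (1 - ρ)) - ρ * (w t - w 0) ≤ pathCost c t w := by
  have hd := integrable_deriv hw
  have hconst : IntervalIntegrable (fun _ : ℝ => ρ * (1 - ρ)) volume 0 t :=
    intervalIntegrable_const
  have hint : ∫ s in (0 : ℝ)..t, (ρ * (1 - ρ) - ρ * deriv w s)
      = t * (ρ * (1 - ρ)) - ρ * (w t - w 0) := by
    rw [intervalIntegral.integral_sub hconst (hd.const_mul ρ),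
      intervalIntegral.integral_const, intervalIntegral.integral_const_mul,
      integral_deriv_piecewise ht hw, sub_zero, smul_eq_mul]
  rw [← hint]
  refine intervalIntegral.integral_mono_ae ht (hconst.sub (hd.const_mul ρ))
    (integrable_cost hc hw) ?_
  filter_upwards [(countable_transversal_zeros w).ae_notMem volume] with s hs
  exact calibration h0 h1 hρc fun h => by_contra fun h' => hs ⟨h, h'⟩

/-- The characteristic through `(x, t)` has cost `t ρ²`. -/
lemma pathCost_characteristic {c ρ : ℝ} (h0 : 0 ≤ ρ) (h1 : ρ ≤ 1) (hρc : ρ = 1 / 2 → c = 1)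
    (x t : ℝ) : pathCost c t (fun s => x + (1 - 2 * ρ) * (s - t)) = t * ρ ^ 2 := by
  have hd : ∀ s, deriv (fun s => x + (1 - 2 * ρ) * (s - t)) s = 1 - 2 * ρ := fun s => by
    simp
  have hz : ∀ᵐ s : ℝ, lam c (x + (1 - 2 * ρ) * (s - t)) = 1 := by
    by_cases hρ : ρ = 1 / 2
    · exact ae_of_all _ fun s => by simp [lam, hρc hρ]
    · have hne : 1 - 2 * ρ ≠ 0 := fun h => hρ (by linarith)
      filter_upwards [(countable_singleton (t - x / (1 - 2 * ρ))).ae_notMem volume] with s hs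
      refine if_neg fun h => hs ?_
      rw [mem_singleton_iff]
      field_simp
      linarith
  have heq : pathCost c t (fun s => x + (1 - 2 * ρ) * (s - t)) = ∫ _ in (0 : ℝ)..t, ρ ^ 2 := by
    refine intervalIntegral.integral_congr_ae ?_
    filter_upwards [hz] with s hs _
    rw [hd, hs, div_one, one_mul, g0_one_sub_two_mul h0 h1]
  rw [heq]
  simp

/-- for `ρ ∈ [0,ρ*] ∪ [1−ρ*,1]` and the constant profile `v₀(q) = ρq`,
the macroscopic evolution is that of homogeneous TASEP:
`v(x,t) = ρx − tρ(1−ρ)`. -/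
theorem constant_profile_undisturbed
    (c : ℝ) (hc : c ∈ Set.Ioc (0 : ℝ) 1)
    (ρs : ℝ) (hρs : ρs = 1 / 2 - Real.sqrt (1 - c) / 2)
    (ρ : ℝ) (hρ : ρ ∈ Set.Icc (0 : ℝ) ρs ∪ Set.Icc (1 - ρs) 1)
    (x t : ℝ) (ht : 0 < t) :
    vVar c (fun q => ρ * q) x t = ρ * x - t * (ρ * (1 - ρ)) := by
  have hsq : Real.sqrt (1 - c) ^ 2 = 1 - c := Real.sq_sqrt (by linarith [hc.2])
  have hs0 := Real.sqrt_nonneg (1 - c)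
  have hs1 : Real.sqrt (1 - c) ≤ 1 := Real.sqrt_le_one.2 (by linarith [hc.1])
  set r := Real.sqrt (1 - c)
  have h0 : 0 ≤ ρ := by rcases hρ with h | h <;> linarith [h.1, h.2]
  have h1 : ρ ≤ 1 := by rcases hρ with h | h <;> linarith [h.1, h.2]
  -- The hypothesis on `ρ` says `|1 - 2ρ| ≥ √(1 - c)`, that is `ρ(1 - ρ) ≤ c / 4`.
  have hρc : ρ * (1 - ρ) ≤ c / 4 := by
    have : r ^ 2 ≤ (1 - 2 * ρ) ^ 2 := by
      rcases hρ with h | h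
      · exact pow_le_pow_left₀ hs0 (by linarith [h.2]) 2
      · rw [← neg_sq (1 - 2 * ρ)]
        exact pow_le_pow_left₀ hs0 (by linarith [h.1]) 2
    nlinarith
  have hhalf : ρ = 1 / 2 → c = 1 := by
    rintro rfl
    linarith [hc.2]
  refine IsGreatest.csSup_eq ⟨?_, ?_⟩
  · refine ⟨fun s => x + (1 - 2 * ρ) * (s - t), ⟨by fun_prop, 1, fun i => i * t, by simp, by simp,
      ?_, ?_⟩, by simp, ?_⟩
    · intro i _
      push_cast
      linarith
    · intro i _
      have : ContDiff ℝ 1 fun s : ℝ => x + (1 - 2 * ρ) * (s - t) := by fun_prop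
      exact this.contDiffOn
    · rw [pathCost_characteristic h0 h1 hhalf]
      ring
  · rintro a ⟨w, hw, rfl, rfl⟩
    linarith [pathCost_lower_bound hc h0 h1 hρc ht.le hw]
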